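/- arXiv:2407.14091 — 2 statements merged into one kernel-verified Lean document; each statement's English description precedes it below -/
import Mathlib

section
/- For positive integers n, k, d with k > d ≥ 2 and n ≥ 2k+2d-3, every intersecting family F of k-element subsets of {1,...,n} contains a d-element set S ⊆ {1,...,n} with |{T ∈ F : S ⊆ T}| ≤ C(n-d-1, k-d-1). -/
/-!
Averaging over the `d`-sets disjoint from a member `A` of `F`, it suffices to find `A ∈ F` with
`∑ T ∈ F, (#(T \ A)).choose d ≤ μ`, where `μ = (n - k).choose d * (n - d - 1).choose (k - d - 1)`,
and hence to prove `∑ A ∈ F, ∑ T ∈ F, (#(T \ A)).choose d ≤ μ * #F`. Let `M d` be the matrix with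
entries `(#(T \ A)).choose d`, indexed by the `k`-sets. The entries of `M k` vanish on intersecting
pairs, so, as in the Delsarte–Hoffman proof of the Erdős–Ko–Rado theorem, it is enough that
`μ • 1 - M d + c • M k` is positive semidefinite for some `c`. This matrix acts triangularly on the
indicators `A ↦ [A ∩ J = ∅]`, graded by `#J ≤ k`, and its diagonal coefficients there are explicit.
With the above `μ` and a suitable `c` those at `#J = 0` and `#J = 1` vanish, and
`2 * k + 2 * d ≤ n + 3` makes the remaining ones nonnegative.
-/

open Finset Matrix
open scoped InnerProductSpace

section TriangularOperators

variable {𝕜 : Type*} [RCLike 𝕜]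

theorem isPositive_of_flag {E : Type*} [NormedAddCommGroup E] [InnerProductSpace 𝕜 E]
    {T : E →ₗ[𝕜] E} (hT : T.IsSymmetric) {U : ℕ → Submodule 𝕜 E}
    [∀ j, (U j).HasOrthogonalProjection] (hU : Monotone U) {N : ℕ} (hbot : U 0 = ⊥)
    (htop : U N = ⊤) {b : ℕ → ℝ} (hb : ∀ j < N, 0 ≤ b j)
    (hTU : ∀ j < N, ∀ v ∈ U (j + 1), T v - (b j : 𝕜) • v ∈ U j) : T.IsPositive := by
  suffices h : ∀ j ≤ N, ∀ v ∈ U j, 0 ≤ RCLike.re ⟪T v, v⟫_𝕜 from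
    ⟨hT, fun v ↦ h N le_rfl v (htop ▸ Submodule.mem_top)⟩
  intro j hj
  induction j with
  | zero =>
    intro v hv
    rw [hbot, Submodule.mem_bot] at hv
    simp [hv]
  | succ j ih =>
    intro v hv
    have hmono : U j ≤ U (j + 1) := hU j.le_succ
    obtain ⟨g, hg, w, hw, rfl⟩ := (U j).exists_add_mem_mem_orthogonal v
    have hTg : T g ∈ U j := by
      simpa using add_mem (hTU j hj g (hmono hg)) ((U j).smul_mem (b j : 𝕜) hg)
    have hgw : ⟪T g, w⟫_𝕜 = 0 := hw _ hTg
    have hwg : ⟪T w, g⟫_𝕜 = 0 := by rw [hT w g, inner_eq_zero_symm, hgw]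
    have hww : ⟪T w, w⟫_𝕜 = b j * ⟪w, w⟫_𝕜 := by
      have hTw := hw _ (hTU j hj w (by simpa using sub_mem hv (hmono hg)))
      rwa [inner_sub_left, inner_smul_left, RCLike.conj_ofReal, sub_eq_zero] at hTw
    have hre : RCLike.re ⟪T (g + w), g + w⟫_𝕜
        = RCLike.re ⟪T g, g⟫_𝕜 + b j * RCLike.re ⟪w, w⟫_𝕜 := by
      simp [inner_add_left, inner_add_right, hgw, hwg, hww]
    rw [hre]
    exact add_nonneg (ih (by omega) g hg) (mul_nonneg (hb j hj) inner_self_nonneg)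

open scoped ComplexOrder in
theorem posSemidef_of_triangular {m ι : Type*} [Fintype m] {M : Matrix m m 𝕜}
    (hM : M.IsHermitian) {v : ι → m → 𝕜} {deg : ι → ℕ} {N : ℕ}
    (hspan : Submodule.span 𝕜 (v '' {i | deg i < N}) = ⊤) {b : ℕ → ℝ} (hb : ∀ j < N, 0 ≤ b j)
    (hMv : ∀ i, deg i < N →
      M *ᵥ v i - (b (deg i) : 𝕜) • v i ∈ Submodule.span 𝕜 (v '' {i' | deg i' < deg i})) :
    M.PosSemidef := by
  classical
  let V (j : ℕ) : Submodule 𝕜 (m → 𝕜) := Submodule.span 𝕜 (v '' {i | deg i < j})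
  have hV : Monotone V := fun i j hij ↦
    Submodule.span_mono (Set.image_mono fun _ hi ↦ lt_of_lt_of_le hi hij)
  have hstep : ∀ j < N, V (j + 1) ≤ (V j).comap (M.mulVecLin - (b j : 𝕜) • LinearMap.id) := by
    intro j hj
    refine Submodule.span_le.2 (Set.image_subset_iff.2 fun i (hi : deg i < j + 1) ↦ ?_)
    have hMi := hMv i (by omega)
    rcases (Nat.lt_succ_iff.1 hi).eq_or_lt with rfl | hlt
    · exact hMi
    · have hvi : v i ∈ V j := Submodule.subset_span ⟨i, hlt, rfl⟩
      have hMvi : M *ᵥ v i ∈ V j := by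
        simpa using add_mem (hV hlt.le hMi) ((V j).smul_mem (b (deg i) : 𝕜) hvi)
      exact sub_mem hMvi ((V j).smul_mem (b j : 𝕜) hvi)
  rw [← isPositive_toEuclideanLin_iff]
  refine isPositive_of_flag (isSymmetric_toEuclideanLin_iff.2 hM)
    (U := fun j ↦ (V j).comap (WithLp.linearEquiv 2 𝕜 (m → 𝕜)).toLinearMap)
    (fun i j hij ↦ Submodule.comap_mono (hV hij)) (N := N) ?_ ?_ hb fun j hj x hx ↦ hstep j hj hx
  · ext x
    simp [V]
  · simp [V, hspan]

theorem sum_sum_nonneg_of_posSemidef {m R : Type*} [Ring R] [PartialOrder R] [StarRing R]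
    {M : Matrix m m R} (hM : M.PosSemidef) (s : Finset m) : 0 ≤ ∑ i ∈ s, ∑ j ∈ s, M i j := by
  classical
  have hrow (i : m) : ∑ j ∈ s.attach, M i j = ∑ j ∈ s, M i j := sum_attach s (M i)
  simpa [Finsupp.sum_indicator_index, hrow, sum_attach s fun i ↦ ∑ j ∈ s, M i j] using
    hM.2 (Finsupp.indicator s fun _ _ ↦ 1)

end TriangularOperators

section Counting

variable {α : Type*} [DecidableEq α]

theorem card_filter_subset_powersetCard {I B : Finset α} (hI : I ⊆ B) {m : ℕ} (hm : m ≤ #B) :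
    #{T ∈ powersetCard m B | I ⊆ T} = (#B - #I).choose (#B - m) := by
  rw [← card_sdiff_of_subset hI, ← card_powersetCard]
  refine card_nbij' (B \ ·) (B \ ·) ?_ ?_ ?_ ?_
  · intro T hT
    simp only [coe_filter, mem_powersetCard, Set.mem_ofPred_eq, mem_coe] at hT ⊢
    exact ⟨sdiff_subset_sdiff subset_rfl hT.2, by rw [card_sdiff_of_subset hT.1.1, hT.1.2]⟩
  · intro R hR
    simp only [coe_filter, mem_powersetCard, Set.mem_ofPred_eq, mem_coe] at hR ⊢
    obtain ⟨hRB, hRI⟩ := subset_sdiff.1 hR.1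
    refine ⟨⟨sdiff_subset, ?_⟩, subset_sdiff.2 ⟨hI, hRI.symm⟩⟩
    rw [card_sdiff_of_subset hRB, hR.2]
    omega
  · intro T hT
    simp only [coe_filter, mem_powersetCard, Set.mem_ofPred_eq] at hT
    exact Finset.sdiff_sdiff_eq_self hT.1.1
  · intro R hR
    simp only [mem_powersetCard, mem_coe] at hR
    exact Finset.sdiff_sdiff_eq_self (hR.1.trans sdiff_subset)

theorem filter_disjoint_powersetCard (A B : Finset α) (m : ℕ) :
    {T ∈ powersetCard m B | Disjoint A T} = powersetCard m (B \ A) := by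
  ext T
  grind [subset_sdiff]

theorem sum_choose_card_sdiff (F : Finset (Finset α)) {B : Finset α} (hF : ∀ T ∈ F, T ⊆ B)
    (A : Finset α) (d : ℕ) :
    ∑ T ∈ F, (#(T \ A)).choose d = ∑ S ∈ powersetCard d (B \ A), #{T ∈ F | S ⊆ T} := by
  have hsub : ∀ T ∈ F, powersetCard d (T \ A) = {S ∈ powersetCard d (B \ A) | S ⊆ T} := by
    intro T hT
    ext S
    simp only [mem_filter, mem_powersetCard, subset_sdiff]
    exact ⟨fun ⟨⟨hST, hSA⟩, hS⟩ ↦ ⟨⟨⟨hST.trans (hF T hT), hSA⟩, hS⟩, hST⟩,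
      fun ⟨⟨⟨_, hSA⟩, hS⟩, hST⟩ ↦ ⟨⟨hST, hSA⟩, hS⟩⟩
  calc ∑ T ∈ F, (#(T \ A)).choose d
      = ∑ T ∈ F, #{S ∈ powersetCard d (B \ A) | S ⊆ T} :=
        sum_congr rfl fun T hT ↦ by rw [← hsub T hT, card_powersetCard]
    _ = ∑ S ∈ powersetCard d (B \ A), #{T ∈ F | S ⊆ T} := by
        simp_rw [card_filter]
        exact sum_comm

theorem sum_powersetCard_choose_card_sdiff (A B : Finset α) {k d : ℕ} (hk : k ≤ #B) :
    ∑ T ∈ powersetCard k B, (#(T \ A)).choose d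
      = (#B - d).choose (#B - k) * (#(B \ A)).choose d := by
  rw [sum_choose_card_sdiff _ (fun T hT ↦ (mem_powersetCard.1 hT).1), mul_comm,
    ← card_powersetCard]
  refine sum_const_nat fun S hS ↦ ?_
  obtain ⟨hSB, rfl⟩ := mem_powersetCard.1 hS
  exact card_filter_subset_powersetCard (hSB.trans sdiff_subset) hk

theorem sum_powerset_neg_one_pow_ite_subset {R : Type*} [Ring R] (J T : Finset α) :
    ∑ I ∈ J.powerset, (-1 : R) ^ #I * (if I ⊆ T then 1 else 0)
      = if Disjoint J T then 1 else 0 := by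
  have hfilter : {I ∈ J.powerset | I ⊆ T} = (J ∩ T).powerset := by
    ext I
    simp only [mem_filter, mem_powerset, subset_inter_iff]
  simp_rw [mul_ite, mul_one, mul_zero, ← sum_filter, hfilter, disjoint_iff_inter_eq_empty]
  exact_mod_cast congrArg (Int.cast : ℤ → R) (sum_powerset_neg_one_pow_card (x := J ∩ T))

theorem choose_card_sdiff_eq_sum {R : Type*} [Ring R] (J C : Finset α) {m : ℕ} (hm : m ≤ #C) :
    ((#(C \ J)).choose m : R) = ∑ I ∈ J.powerset,
      (-1 : R) ^ #I * ((#C - #I).choose (#C - m) : R) * if I ⊆ C then 1 else 0 := by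
  calc ((#(C \ J)).choose m : R)
      = ∑ T ∈ powersetCard m C, if Disjoint J T then 1 else 0 := by
        rw [← card_powersetCard, ← filter_disjoint_powersetCard, sum_boole]
    _ = ∑ I ∈ J.powerset, ∑ T ∈ powersetCard m C, (-1 : R) ^ #I * if I ⊆ T then 1 else 0 := by
        simp_rw [← sum_powerset_neg_one_pow_ite_subset]
        exact sum_comm
    _ = _ := sum_congr rfl fun I _ ↦ ?_
  rw [← mul_sum, sum_boole, mul_assoc]
  split_ifs with hI
  · rw [card_filter_subset_powersetCard hI hm, mul_one]
  · rw [filter_false_of_mem fun T hT hIT ↦ hI (hIT.trans (mem_powersetCard.1 hT).1)]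
    simp

end Counting

section Weights

/-- The `j`-th eigenvalue of the Kneser graph `K(n, a)` is `(-1) ^ j * (n - a - j).choose (a - j)`.
`kneserWeight n a j` is its absolute value, divided by the degree `(n - a).choose a` and
multiplied by `n - a`. The product form makes it `0` for `j > a`, where the truncated `a - j` would
turn the binomial coefficient into `1`. -/
noncomputable def kneserWeight (n a j : ℕ) : ℝ :=
  (n - a) * ∏ i ∈ range j, ((a : ℝ) - i) / (n - a - i)

theorem choose_sub_eq_choose_mul_prod {a b : ℕ} (hab : a ≤ b) {j : ℕ} (hj : j ≤ b) :
    ((b - j).choose (b - a) : ℝ) = b.choose a * ∏ i ∈ range j, ((a : ℝ) - i) / (b - i) := by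
  induction j with
  | zero => simp [Nat.choose_symm hab]
  | succ j ih =>
    have hpos : (0 : ℝ) < b - j := by
      rw [sub_pos]
      exact_mod_cast hj
    have hstep : ((b - (j + 1)).choose (b - a) : ℝ) * (b - j)
        = (b - j).choose (b - a) * (a - j) := by
      have hnat := Nat.choose_mul_succ_eq (b - (j + 1)) (b - a)
      rw [show b - (j + 1) + 1 = b - j by omega] at hnat
      rcases le_or_gt j a with hja | hja
      · rw [show b - j - (b - a) = a - j by omega] at hnat
        rw [← Nat.cast_sub (by omega), ← Nat.cast_sub hja]
        exact_mod_cast hnat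
      · rw [Nat.choose_eq_zero_of_lt (by omega : b - (j + 1) < b - a),
          Nat.choose_eq_zero_of_lt (by omega : b - j < b - a)]
        simp
    rw [prod_range_succ, ← mul_assoc, ← ih (by omega), ← mul_div_assoc, ← hstep,
      mul_div_cancel_right₀ _ hpos.ne']

theorem sub_mul_choose_eq_choose_mul_kneserWeight {n a j : ℕ} (ha : 2 * a ≤ n)
    (hj : a + j ≤ n) :
    (n - a) * ((n - a - j).choose (n - 2 * a) : ℝ) = (n - a).choose a * kneserWeight n a j := by
  have hchoose := choose_sub_eq_choose_mul_prod (show a ≤ n - a by omega)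
    (show j ≤ n - a by omega)
  rw [show n - a - a = n - 2 * a by omega, Nat.cast_sub (by omega)] at hchoose
  rw [hchoose, kneserWeight]
  ring

theorem kneserWeight_succ (n a j : ℕ) :
    kneserWeight n a (j + 1) = kneserWeight n a j * ((a - j) / (n - a - j)) := by
  rw [kneserWeight, prod_range_succ, ← mul_assoc, kneserWeight]

theorem kneserWeight_zero (n a : ℕ) : kneserWeight n a 0 = n - a := by
  simp [kneserWeight]

theorem kneserWeight_one {n a : ℕ} (ha : a < n) : kneserWeight n a 1 = a := by
  have : (0 : ℝ) < n - a := sub_pos.2 (by exact_mod_cast ha)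
  rw [kneserWeight_succ, kneserWeight_zero]
  simp only [Nat.cast_zero, sub_zero]
  field_simp

theorem kneserWeight_eq_zero {n a j : ℕ} (haj : a < j) : kneserWeight n a j = 0 := by
  rw [kneserWeight, prod_eq_zero (mem_range.2 haj) (by simp), mul_zero]

theorem kneserWeight_nonneg {n a j : ℕ} (hj : a + j ≤ n) : 0 ≤ kneserWeight n a j := by
  rcases lt_or_ge a j with haj | haj
  · exact (kneserWeight_eq_zero haj).ge
  have hn : (a : ℝ) + j ≤ n := by exact_mod_cast hj
  refine mul_nonneg (by linarith [j.cast_nonneg (α := ℝ)]) (prod_nonneg fun i hi ↦ ?_)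
  have hij : (i : ℝ) ≤ j := by exact_mod_cast (mem_range.1 hi).le
  have hja : (j : ℝ) ≤ a := by exact_mod_cast haj
  exact div_nonneg (by linarith) (by linarith)

theorem kneserWeight_le_kneserWeight_left {n d k j : ℕ} (hdk : d ≤ k) (hj : 1 ≤ j)
    (hn : k + j ≤ n) : kneserWeight n d j ≤ kneserWeight n k j := by
  induction j, hj using Nat.le_induction with
  | base =>
    rw [kneserWeight_one (by omega), kneserWeight_one (by omega)]
    exact_mod_cast hdk
  | succ j _ ih =>
    rcases lt_or_ge d (j + 1) with hjd | hjd
    · rw [kneserWeight_eq_zero hjd]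
      exact kneserWeight_nonneg hn
    have hd : (j : ℝ) ≤ d := by exact_mod_cast (by omega : j ≤ d)
    have hk : (d : ℝ) ≤ k := by exact_mod_cast hdk
    have hn' : (k : ℝ) + j < n := by exact_mod_cast hn
    rw [kneserWeight_succ, kneserWeight_succ]
    exact mul_le_mul (ih (by omega)) (div_le_div₀ (by linarith) (by linarith) (by linarith)
      (by linarith)) (div_nonneg (by linarith) (by linarith)) (kneserWeight_nonneg (by omega))

theorem kneserWeight_succ_le {n a j : ℕ} (ha : 2 * a ≤ n) (hj : a + j < n) :
    kneserWeight n a (j + 1) ≤ kneserWeight n a j := by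
  rw [kneserWeight_succ]
  refine mul_le_of_le_one_right (kneserWeight_nonneg hj.le) ?_
  have ha' : (2 : ℝ) * a ≤ n := by exact_mod_cast ha
  have hj' : (a : ℝ) + j < n := by exact_mod_cast hj
  rw [div_le_one (by linarith)]
  linarith

theorem two_mul_kneserWeight_le {n k d j : ℕ} (hdk : d < k) (hk : 2 * k < n)
    (hn : 2 * k + 2 * d ≤ n + 3) (hj : 2 ≤ j) (hjk : j ≤ k) :
    2 * kneserWeight n d j ≤ n - 2 * k := by
  induction j, hj using Nat.le_induction with
  | base =>
    have hpos : (0 : ℝ) < n - d - 1 := by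
      have : (d : ℝ) + 1 < n := by exact_mod_cast (by omega : d + 1 < n)
      linarith
    have hweight : kneserWeight n d 2 = d * (d - 1) / (n - d - 1) := by
      rw [kneserWeight_succ, kneserWeight_one (by omega), Nat.cast_one, mul_div_assoc]
    rw [hweight, ← mul_div_assoc, div_le_iff₀ hpos]
    rcases le_or_gt d 1 with hd | hd
    · have hk' : (2 : ℝ) * k < n := by exact_mod_cast hk
      have hzero : (d : ℝ) * (d - 1) = 0 := by interval_cases d <;> simp
      rw [hzero, mul_zero]
      exact mul_nonneg (by linarith) hpos.le
    · obtain ⟨e, rfl⟩ := Nat.exists_eq_add_of_le' (hd : 2 ≤ d)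
      obtain ⟨l, rfl⟩ := Nat.exists_eq_add_of_lt hdk
      obtain ⟨m, rfl⟩ : ∃ m, n = 2 * (e + 2 + l + 1) + 2 * e + 1 + m :=
        ⟨n - (2 * (e + 2 + l + 1) + 2 * e + 1), by omega⟩
      rw [← sub_nonneg]
      push_cast
      ring_nf
      positivity
  | succ j hj ih =>
    linarith [ih (by omega), kneserWeight_succ_le (n := n) (a := d) (j := j) (by omega) (by omega)]

theorem kneserWeight_sub_kneserWeight_succ {n k d j : ℕ} (hk : k + j < n) (hd : d + j < n) :
    kneserWeight n k (j + 1) - kneserWeight n d (j + 1)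
      = (kneserWeight n k j - kneserWeight n d j) * ((k - j) / (n - k - j))
        + kneserWeight n d j * ((k - d) * (n - 2 * j) / ((n - k - j) * (n - d - j))) := by
  have hk' : (n : ℝ) - k - j ≠ 0 := by
    have : (k : ℝ) + j < n := by exact_mod_cast hk
    linarith
  have hd' : (n : ℝ) - d - j ≠ 0 := by
    have : (d : ℝ) + j < n := by exact_mod_cast hd
    linarith
  rw [kneserWeight_succ, kneserWeight_succ]
  field_simp
  ring

theorem kneserWeight_three {n a : ℕ} (ha : a < n) :
    kneserWeight n a 3 = a * (a - 1) * (a - 2) / ((n - a - 1) * (n - a - 2)) := by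
  rw [kneserWeight_succ, kneserWeight_succ, kneserWeight_one ha]
  push_cast
  rw [mul_assoc, div_mul_div_comm, ← mul_div_assoc, ← mul_assoc]

theorem kneserWeight_three_sub_le {n k d : ℕ} (hdk : d < k) (hk3 : 3 ≤ k) (hk : 2 * k < n)
    (hn : 2 * k + 2 * d ≤ n + 3) :
    kneserWeight n k 3 - kneserWeight n d 3 ≤ k - d := by
  have hkR : (0 : ℝ) < n - k - 2 := by
    have : (k : ℝ) + 2 < n := by exact_mod_cast (by omega : k + 2 < n)
    linarith
  have hdR : (0 : ℝ) < n - d - 2 := by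
    have : (d : ℝ) < k := by exact_mod_cast hdk
    linarith
  have hk1 : (0 : ℝ) < n - k - 1 := by linarith
  have hd1 : (0 : ℝ) < n - d - 1 := by linarith
  rw [kneserWeight_three (by omega), kneserWeight_three (by omega), div_sub_div _ _
    (by positivity) (by positivity), div_le_iff₀ (by positivity), ← sub_nonneg]
  rcases le_or_gt d 1 with hd | hd
  · obtain ⟨l, rfl⟩ := Nat.exists_eq_add_of_le hk3
    obtain ⟨m, rfl⟩ := Nat.exists_eq_add_of_lt hk
    interval_cases d
    all_goals
      push_cast
      ring_nf
      positivity
  · obtain ⟨e, rfl⟩ := Nat.exists_eq_add_of_le' (hd : 2 ≤ d)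
    obtain ⟨l, rfl⟩ := Nat.exists_eq_add_of_lt hdk
    obtain ⟨m, rfl⟩ : ∃ m, n = 2 * (e + 2 + l + 1) + 2 * e + 1 + m :=
      ⟨n - (2 * (e + 2 + l + 1) + 2 * e + 1), by omega⟩
    -- As a polynomial in `e`, `l` and `m` the difference has only nonnegative coefficients.
    push_cast
    ring_nf
    positivity

theorem kneserWeight_sub_le {n k d j : ℕ} (hdk : d < k) (hk : 2 * k < n)
    (hn : 2 * k + 2 * d ≤ n + 3) (hj : 3 ≤ j) (hjk : j ≤ k) :
    kneserWeight n k j - kneserWeight n d j ≤ k - d := by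
  induction j, hj using Nat.le_induction with
  | base => exact kneserWeight_three_sub_le hdk hjk hk hn
  | succ j hj ih =>
    have hjR : (j : ℝ) + 1 ≤ k := by exact_mod_cast hjk
    have hdR : (d : ℝ) < k := by exact_mod_cast hdk
    have hkR : (2 : ℝ) * k < n := by exact_mod_cast hk
    have hkpos : (0 : ℝ) < n - k - j := by linarith
    have hdpos : (0 : ℝ) < n - d - j := by linarith
    have hweight : kneserWeight n d j * (n - 2 * j) ≤ (n - 2 * k) * (n - d - j) := by
      calc kneserWeight n d j * (n - 2 * j) ≤ kneserWeight n d j * (2 * (n - d - j)) :=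
            mul_le_mul_of_nonneg_left (by linarith) (kneserWeight_nonneg (by omega))
        _ = 2 * kneserWeight n d j * (n - d - j) := by ring
        _ ≤ (n - 2 * k) * (n - d - j) := mul_le_mul_of_nonneg_right
            (two_mul_kneserWeight_le hdk hk hn (by omega) (by omega)) hdpos.le
    calc kneserWeight n k (j + 1) - kneserWeight n d (j + 1)
        = (kneserWeight n k j - kneserWeight n d j) * ((k - j) / (n - k - j))
          + (k - d) * (kneserWeight n d j * (n - 2 * j)) / ((n - k - j) * (n - d - j)) := by
          rw [kneserWeight_sub_kneserWeight_succ (by omega) (by omega)]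
          ring
      _ ≤ (k - d) * ((k - j) / (n - k - j))
          + (k - d) * ((n - 2 * k) * (n - d - j)) / ((n - k - j) * (n - d - j)) := by
          have hratio : (0 : ℝ) ≤ (k - j) / (n - k - j) := div_nonneg (by linarith) hkpos.le
          refine add_le_add (mul_le_mul_of_nonneg_right (ih (by omega)) hratio) ?_
          gcongr
      _ = k - d := by
          field_simp
          ring

theorem sub_add_neg_one_pow_mul_kneserWeight_sub_nonneg {n k d j : ℕ} (hdk : d < k)
    (hk : 2 * k < n) (hn : 2 * k + 2 * d ≤ n + 3) (hjk : j ≤ k) :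
    0 ≤ (k - d : ℝ) + (-1) ^ j * (kneserWeight n k j - kneserWeight n d j) := by
  have hdR : (d : ℝ) ≤ k := by exact_mod_cast hdk.le
  rcases Nat.even_or_odd j with hj | hj
  · rw [hj.neg_one_pow, one_mul]
    rcases Nat.eq_zero_or_pos j with rfl | hpos
    · simp [kneserWeight_zero]
    · linarith [kneserWeight_le_kneserWeight_left hdk.le hpos (show k + j ≤ n by omega)]
  · rw [hj.neg_one_pow]
    obtain rfl | hj3 : j = 1 ∨ 3 ≤ j := by grind
    · rw [kneserWeight_one (by omega), kneserWeight_one (by omega)]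
      linarith
    · linarith [kneserWeight_sub_le hdk hk hn hj3 hjk]

theorem choose_mul_choose_eq_choose_mul_choose {n k d j : ℕ} (hdk : d ≤ k) (hn : d + k ≤ n)
    (hj : k + j ≤ n) :
    (n - d - j).choose (n - k - j) * (n - k - j).choose (n - k - d)
      = (n - d - j).choose (n - 2 * d) * (n - 2 * d).choose (n - k - d) := by
  rcases lt_or_ge d j with hdj | hjd
  · rw [Nat.choose_eq_zero_of_lt (by omega : n - k - j < n - k - d),
      Nat.choose_eq_zero_of_lt (by omega : n - d - j < n - 2 * d), mul_zero, zero_mul]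
  · rw [Nat.choose_symm_of_eq_add (by omega : n - k - j = n - k - d + (d - j)),
      Nat.choose_mul (by omega), Nat.choose_symm_of_eq_add
      (by omega : n - d - j = n - 2 * d + (d - j))]
    congr 2 <;> omega

theorem sub_mul_choose_mul_choose {n k d j : ℕ} (hdk : d < k) (hn : d + k ≤ n) (hj : k + j ≤ n) :
    ((k : ℝ) - d) * ((n - d - j).choose (n - k - j) * (n - k - j).choose (n - k - d))
      = (n - k).choose d * (n - d - 1).choose (k - d - 1) * kneserWeight n d j := by
  have hnd : (0 : ℝ) < n - d := sub_pos.2 (by exact_mod_cast (by omega : d < n))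
  have habsorb :
      ((n : ℝ) - d) * (n - d - 1).choose (k - d - 1) = (k - d) * (n - d).choose (k - d) := by
    have h := Nat.add_one_mul_choose_eq (n - d - 1) (k - d - 1)
    rw [show n - d - 1 + 1 = n - d by omega, show k - d - 1 + 1 = k - d by omega,
      mul_comm _ (k - d)] at h
    rw [← Nat.cast_sub (by omega), ← Nat.cast_sub hdk.le]
    exact_mod_cast h
  have hzero : ((n - d).choose d * (n - 2 * d).choose (n - k - d) : ℝ)
      = (n - d).choose (k - d) * (n - k).choose d := by
    have h := choose_mul_choose_eq_choose_mul_choose (j := 0) hdk.le hn (by omega)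
    simp only [Nat.sub_zero] at h
    rw [Nat.choose_symm_of_eq_add (by omega : n - d = n - k + (k - d)),
      Nat.choose_symm_of_eq_add (by omega : n - k = n - k - d + d),
      Nat.choose_symm_of_eq_add (by omega : n - d = n - 2 * d + d)] at h
    exact_mod_cast h.symm
  have hweight := sub_mul_choose_eq_choose_mul_kneserWeight (n := n) (a := d) (j := j)
    (by omega) (by omega)
  have hswap : ((n - d - j).choose (n - k - j) * (n - k - j).choose (n - k - d) : ℝ)
      = (n - d - j).choose (n - 2 * d) * (n - 2 * d).choose (n - k - d) := by
    exact_mod_cast choose_mul_choose_eq_choose_mul_choose hdk.le hn hj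
  refine mul_left_cancel₀ hnd.ne' ?_
  rw [hswap]
  linear_combination (k - d : ℝ) * (n - 2 * d).choose (n - k - d) * hweight
    + (k - d : ℝ) * kneserWeight n d j * hzero - (n - k).choose d * kneserWeight n d j * habsorb

end Weights

section SetDifferenceMatrix

variable {α : Type*} [DecidableEq α]

/-- The indicator function, on the `k`-sets, of being disjoint from `J`. -/
def disjointIndicator (k : ℕ) (J : Finset α) : Set.powersetCard α k → ℝ :=
  fun A ↦ if Disjoint J A.1 then 1 else 0

variable (α) in
/-- The matrix on the `k`-sets whose `(A, T)` entry counts the `d`-subsets of `T` disjoint from `A`.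
For `d = k` it is the adjacency matrix of the Kneser graph. -/
def sdiffMatrix (k d : ℕ) :
    Matrix (Set.powersetCard α k) (Set.powersetCard α k) ℝ :=
  .of fun A T ↦ (#(T.1 \ A.1)).choose d

/-- The coefficient of `disjointIndicator k I`, for `I ⊆ J` with `#I = i` and `#J = j`, in the image
of `disjointIndicator k J` under `sdiffMatrix α k d`, where `n` is the cardinality of `α`. -/
def sdiffCoeff (n k d j i : ℕ) : ℝ :=
  (-1) ^ i * ((n - d - j).choose (n - k - j) * (n - k - i).choose (n - k - d))

theorem isHermitian_sdiffMatrix (k d : ℕ) : (sdiffMatrix α k d).IsHermitian := by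
  ext A T
  simp [sdiffMatrix, card_sdiff_comm (A.2.trans T.2.symm)]

theorem sdiffMatrix_self_eq_zero_of_not_disjoint {k : ℕ} {A T : Set.powersetCard α k}
    (h : ¬Disjoint A.1 T.1) : sdiffMatrix α k k A T = 0 := by
  have hlt : #(T.1 \ A.1) < #T.1 :=
    card_lt_card (sdiff_subset.ssubset_of_ne (mt (sdiff_eq_left.1 ·|>.symm) h))
  simp [sdiffMatrix, Nat.choose_eq_zero_of_lt (hlt.trans_eq T.2)]

theorem sum_neg_one_pow_smul_disjointIndicator {k : ℕ} (A : Set.powersetCard α k) :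
    ∑ I ∈ A.1.powerset, (-1 : ℝ) ^ #I • disjointIndicator k I = Pi.single A 1 := by
  ext T
  have hAT : Disjoint A.1 (A.1 \ T.1) ↔ T = A := by
    rw [← sdiff_eq_left, sdiff_sdiff_right_self, inf_eq_inter, inter_eq_left,
      Subtype.ext_iff, eq_comm]
    exact ⟨fun h ↦ eq_of_subset_of_card_le h (T.2.trans A.2.symm).le, fun h ↦ h.subset⟩
  calc (∑ I ∈ A.1.powerset, (-1 : ℝ) ^ #I • disjointIndicator k I) T
      = ∑ I ∈ A.1.powerset, (-1 : ℝ) ^ #I * (if I ⊆ A.1 \ T.1 then 1 else 0) := by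
        rw [Finset.sum_apply]
        refine sum_congr rfl fun I hI ↦ ?_
        simp [disjointIndicator, subset_sdiff, mem_powerset.1 hI]
    _ = (Pi.single A 1 : Set.powersetCard α k → ℝ) T := by
        rw [sum_powerset_neg_one_pow_ite_subset, Pi.single_apply]
        simp only [hAT]

theorem span_disjointIndicator (α : Type*) [Finite α] [DecidableEq α] (k : ℕ) :
    Submodule.span ℝ (disjointIndicator k '' {J : Finset α | #J < k + 1}) = ⊤ := by
  rw [eq_top_iff, ← (Pi.basisFun ℝ (Set.powersetCard α k)).span_eq, Submodule.span_le]
  rintro _ ⟨A, rfl⟩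
  rw [Pi.basisFun_apply, ← sum_neg_one_pow_smul_disjointIndicator]
  refine sum_mem fun I hI ↦ Submodule.smul_mem _ _ (Submodule.subset_span ⟨I, ?_, rfl⟩)
  exact Nat.lt_succ_of_le ((card_le_card (mem_powerset.1 hI)).trans A.2.le)

variable [Fintype α]

theorem sum_disjointIndicator_mul (k : ℕ) (J : Finset α) (f : Finset α → ℝ) :
    ∑ T : Set.powersetCard α k, f T.1 * disjointIndicator k J T
      = ∑ T ∈ powersetCard k Jᶜ, f T := by
  have h : ∑ T ∈ powersetCard k univ, (f T * if Disjoint J T then 1 else 0)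
      = ∑ T : Set.powersetCard α k, f T.1 * if Disjoint J T.1 then 1 else 0 :=
    sum_subtype _ (by simp) _
  rw [compl_eq_univ_sdiff, ← filter_disjoint_powersetCard, sum_filter]
  simpa [disjointIndicator] using h.symm

theorem sdiffMatrix_mulVec_disjointIndicator {k d : ℕ} {J : Finset α}
    (hd : k + d ≤ Fintype.card α) (hJ : k + #J ≤ Fintype.card α) :
    sdiffMatrix α k d *ᵥ disjointIndicator k J
      = ∑ I ∈ J.powerset, sdiffCoeff (Fintype.card α) k d #J #I • disjointIndicator k I := by
  ext A
  have hA : #A.1ᶜ = Fintype.card α - k := by rw [card_compl, A.2]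
  have hcompl : Jᶜ \ A.1 = A.1ᶜ \ J := by
    ext x
    simp [and_comm]
  calc (sdiffMatrix α k d *ᵥ disjointIndicator k J) A
      = ∑ T ∈ powersetCard k Jᶜ, ((#(T \ A.1)).choose d : ℝ) :=
        sum_disjointIndicator_mul k J fun T ↦ ((#(T \ A.1)).choose d : ℝ)
    _ = (Fintype.card α - d - #J).choose (Fintype.card α - k - #J) * (#(A.1ᶜ \ J)).choose d := by
        have h := sum_powersetCard_choose_card_sdiff A.1 Jᶜ (k := k) (d := d)
          (by rw [card_compl]; omega)
        rw [card_compl, hcompl, Nat.sub_right_comm, Nat.sub_right_comm _ #J k] at h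
        exact_mod_cast h
    _ = (∑ I ∈ J.powerset,
          sdiffCoeff (Fintype.card α) k d #J #I • disjointIndicator k I) A := by
        rw [choose_card_sdiff_eq_sum J A.1ᶜ (by omega), hA, mul_sum, Finset.sum_apply]
        refine sum_congr rfl fun I _ ↦ ?_
        simp only [Pi.smul_apply, smul_eq_mul, sdiffCoeff, disjointIndicator,
          subset_compl_iff_disjoint_right]
        ring

theorem posSemidef_smul_one_sub_sdiffMatrix_add {k d : ℕ}
    (hd : k + d ≤ Fintype.card α) (hk : 2 * k ≤ Fintype.card α) {μ c : ℝ}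
    (hμc : ∀ j ≤ k, 0 ≤ μ - sdiffCoeff (Fintype.card α) k d j j
      + c * sdiffCoeff (Fintype.card α) k k j j) :
    (μ • (1 : Matrix _ _ ℝ) - sdiffMatrix α k d + c • sdiffMatrix α k k).PosSemidef := by
  refine posSemidef_of_triangular ?_ (span_disjointIndicator α k) (b := fun j ↦
    μ - sdiffCoeff (Fintype.card α) k d j j + c * sdiffCoeff (Fintype.card α) k k j j)
    (fun j hj ↦ hμc j (by omega)) fun J hJ ↦ ?_
  · exact (((isHermitian_one).smul (.all μ)).sub (isHermitian_sdiffMatrix k d)).add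
      ((isHermitian_sdiffMatrix k k).smul (.all c))
  let coeff (I : Finset α) : ℝ :=
    c * sdiffCoeff (Fintype.card α) k k #J #I - sdiffCoeff (Fintype.card α) k d #J #I
  have hmulVec : (μ • (1 : Matrix _ _ ℝ) - sdiffMatrix α k d + c • sdiffMatrix α k k) *ᵥ
      disjointIndicator k J
        = μ • disjointIndicator k J + ∑ I ∈ J.powerset, coeff I • disjointIndicator k I := by
    rw [add_mulVec, sub_mulVec, smul_mulVec, smul_mulVec, one_mulVec,
      sdiffMatrix_mulVec_disjointIndicator (by omega) (by omega),
      sdiffMatrix_mulVec_disjointIndicator (by omega) (by omega)]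
    simp only [coeff, sub_smul, mul_smul, sum_sub_distrib, ← smul_sum]
    abel
  have hlower : ∑ I ∈ J.ssubsets, coeff I • disjointIndicator k I
      ∈ Submodule.span ℝ (disjointIndicator k '' {I : Finset α | #I < #J}) :=
    sum_mem fun I hI ↦ Submodule.smul_mem _ _
      (Submodule.subset_span ⟨I, card_lt_card (mem_ssubsets.1 hI), rfl⟩)
  convert hlower using 1
  rw [hmulVec, ssubsets, ← add_sum_erase _ _ (mem_powerset_self J)]
  simp only [coeff, RCLike.ofReal_real_eq_id, id]
  module

theorem sub_sdiffCoeff_add_mul_sdiffCoeff_nonneg {n k d j : ℕ} (hdk : d < k) (hk : 2 * k < n)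
    (hn : 2 * k + 2 * d ≤ n + 3) (hjk : j ≤ k) {μ : ℝ}
    (hμ : μ = (n - k).choose d * (n - d - 1).choose (k - d - 1)) :
    0 ≤ μ - sdiffCoeff n k d j j
      + μ * (n - k) / ((k - d) * (n - k).choose k) * sdiffCoeff n k k j j := by
  have hdR : (0 : ℝ) < k - d := sub_pos.2 (by exact_mod_cast hdk)
  have hchoose : (0 : ℝ) < (n - k).choose k := by exact_mod_cast Nat.choose_pos (by omega)
  have hcoeff_d : (k - d) * sdiffCoeff n k d j j = (-1) ^ j * (μ * kneserWeight n d j) := by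
    rw [hμ, ← sub_mul_choose_mul_choose hdk (by omega) (by omega), sdiffCoeff]
    ring
  have hcoeff_k : (n - k) * sdiffCoeff n k k j j
      = (-1) ^ j * ((n - k).choose k * kneserWeight n k j) := by
    rw [← sub_mul_choose_eq_choose_mul_kneserWeight hk.le (by omega), sdiffCoeff,
      Nat.choose_self, Nat.cast_one, one_mul, Nat.sub_right_comm n k j, two_mul, ← Nat.sub_sub]
    ring
  have hμ0 : 0 ≤ μ := hμ ▸ by positivity
  refine nonneg_of_mul_nonneg_right (?_ : 0 ≤ ((k : ℝ) - d) * _) hdR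
  calc (0 : ℝ) ≤ μ * ((k - d) + (-1) ^ j * (kneserWeight n k j - kneserWeight n d j)) :=
        mul_nonneg hμ0 (sub_add_neg_one_pow_mul_kneserWeight_sub_nonneg hdk hk hn hjk)
    _ = (k - d) * μ - (k - d) * sdiffCoeff n k d j j
        + μ / (n - k).choose k * ((n - k) * sdiffCoeff n k k j j) := by
        rw [hcoeff_d, hcoeff_k]
        field_simp
        ring
    _ = _ := by
        field_simp

end SetDifferenceMatrix

section Intersecting

variable {α : Type*} [Fintype α] [DecidableEq α] {k d : ℕ} {F : Finset (Finset α)}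

theorem sum_sum_choose_card_sdiff_le_of_intersecting (hdk : d < k) (hk : 2 * k < Fintype.card α)
    (hn : 2 * k + 2 * d ≤ Fintype.card α + 3) (hF : (F : Set (Finset α)).Sized k)
    (hint : (F : Set (Finset α)).Intersecting) :
    ∑ A ∈ F, ∑ T ∈ F, (#(T \ A)).choose d
      ≤ #F * ((Fintype.card α - k).choose d * (Fintype.card α - d - 1).choose (k - d - 1)) := by
  classical
  obtain ⟨μ, hμ⟩ : ∃ μ : ℝ, μ = (Fintype.card α - k).choose d *
    (Fintype.card α - d - 1).choose (k - d - 1) := ⟨_, rfl⟩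
  let s : Finset (Set.powersetCard α k) := F.subtype (· ∈ Set.powersetCard α k)
  have hsum_subtype (f : Finset α → ℝ) : ∑ A ∈ s, f A = ∑ A ∈ F, f A :=
    sum_subtype_of_mem f fun _ hA ↦ hF hA
  have hkneser : ∀ A ∈ s, ∀ T ∈ s, sdiffMatrix α k k A T = 0 := fun A hA T hT ↦
    sdiffMatrix_self_eq_zero_of_not_disjoint (hint (mem_subtype.1 hA) (mem_subtype.1 hT))
  have hsum := sum_sum_nonneg_of_posSemidef (posSemidef_smul_one_sub_sdiffMatrix_add (by omega)
    hk.le fun j hj ↦ sub_sdiffCoeff_add_mul_sdiffCoeff_nonneg hdk hk hn hj hμ) s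
  have heval : ∑ A ∈ s, ∑ T ∈ s, (μ * (1 : Matrix _ _ ℝ) A T - sdiffMatrix α k d A T)
      = #F * μ - ∑ A ∈ F, ∑ T ∈ F, ((#(T \ A)).choose d : ℝ) := by
    have hdiag : ∑ A ∈ s, ∑ T ∈ s, μ * (1 : Matrix _ _ ℝ) A T = #F * μ := by
      calc ∑ A ∈ s, ∑ T ∈ s, μ * (1 : Matrix _ _ ℝ) A T = ∑ _A ∈ s, μ :=
            sum_congr rfl fun _ hA ↦ by simp [one_apply, hA]
        _ = #F * μ := by rw [hsum_subtype fun _ ↦ μ, sum_const, nsmul_eq_mul]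
    simp_rw [sum_sub_distrib, hdiag, sdiffMatrix, of_apply]
    rw [← hsum_subtype fun A ↦ ∑ T ∈ F, ((#(T \ A)).choose d : ℝ)]
    simp_rw [← hsum_subtype]
  have hle : 0 ≤ #F * μ - ∑ A ∈ F, ∑ T ∈ F, ((#(T \ A)).choose d : ℝ) := by
    rw [← heval]
    refine hsum.trans_eq (sum_congr rfl fun A hA ↦ sum_congr rfl fun T hT ↦ ?_)
    simp [hkneser A hA T hT]
  rw [hμ, sub_nonneg] at hle
  exact_mod_cast hle

/-- For `d = 0` this is the Erdős–Ko–Rado theorem. -/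
theorem stmt_15_general (hdk : d < k) (hk : 2 * k < Fintype.card α)
    (hn : 2 * k + 2 * d ≤ Fintype.card α + 3) (hF : (F : Set (Finset α)).Sized k)
    (hint : (F : Set (Finset α)).Intersecting) :
    ∃ S : Finset α, #S = d ∧
      #{T ∈ F | S ⊆ T} ≤ (Fintype.card α - d - 1).choose (k - d - 1) := by
  rcases F.eq_empty_or_nonempty with rfl | hne
  · obtain ⟨S, -, hS⟩ := exists_subset_card_eq (s := (univ : Finset α)) (n := d) (by
      rw [card_univ]
      omega)
    exact ⟨S, hS, by simp⟩
  obtain ⟨A, hA, hsum⟩ := exists_le_of_sum_le hne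
    ((sum_sum_choose_card_sdiff_le_of_intersecting hdk hk hn hF hint).trans_eq
      (sum_const_nat fun _ _ ↦ rfl).symm)
  have hcard : #(powersetCard d Aᶜ) = (Fintype.card α - k).choose d := by
    rw [card_powersetCard, card_compl, hF hA]
  rw [sum_choose_card_sdiff F (fun T _ ↦ subset_univ T), ← compl_eq_univ_sdiff, ← hcard,
    ← smul_eq_mul, ← sum_const] at hsum
  have hsets : (powersetCard d Aᶜ).Nonempty := by
    rw [← card_pos, hcard]
    exact Nat.choose_pos (by omega)
  obtain ⟨S, hS, hle⟩ := exists_le_of_sum_le hsets hsum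
  exact ⟨S, (mem_powersetCard.1 hS).2, hle⟩

end Intersecting

theorem stmt_15 (n k d : ℕ) (hd : 2 ≤ d) (hdk : d < k) (hn : 2 * k + 2 * d - 3 ≤ n)
    (F : Finset (Finset (Fin n)))
    (hcard : ∀ A ∈ F, A.card = k)
    (hint : ∀ A ∈ F, ∀ B ∈ F, (A ∩ B).Nonempty) :
    ∃ S : Finset (Fin n), S.card = d ∧
      (F.filter (fun T => S ⊆ T)).card ≤ Nat.choose (n - d - 1) (k - d - 1) := by
  have hintersecting : (F : Set (Finset (Fin n))).Intersecting := fun A hA B hB ↦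
    not_disjoint_iff_nonempty_inter.2 (hint A hA B hB)
  simpa only [Fintype.card_fin] using stmt_15_general hdk (by rw [Fintype.card_fin]; omega)
    (by rw [Fintype.card_fin]; omega) (fun A hA ↦ hcard A hA) hintersecting
end

section
/- For integers n, k, d, i with 0 ≤ j ≤ i ≤ d < k ≤ n/2 and any vector v in the eigenspace E_j of the Kneser graph K(n,k), one has W_{i,k}^T W_{i,k} v = C(k-j, k-i)·C(n-i-j, k-i)·v, and W_{i,k}^T W_{i,k} v = 0 whenever j > i. -/
/-- The inclusion matrix `W_{i,k}` with rows indexed by `i`-subsets and columns by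
`k`-subsets of `[n]`, whose `(S,T)`-entry is `1` iff `S ⊆ T`. -/
def inclMatrix (n i k : ℕ) :
    Matrix {S : Finset (Fin n) // S.card = i} {T : Finset (Fin n) // T.card = k} ℝ :=
  fun S T => if S.1 ⊆ T.1 then 1 else 0

/-
Vandermonde's identity expands `W_{i,k} W_{j,k}ᵀ` as a combination of the matrices
`W_{m,i}ᵀ W_{m,j}`: its `(S,J)`-entry depends only on `#(S ∩ J)`, and `C(#(S ∩ J), m)` is the
`(S,J)`-entry of `W_{m,i}ᵀ W_{m,j}`. Let `v = W_{j,k}ᵀ u` be orthogonal to all `m`-stars with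
`m < j`. By induction on `m`, the case `i = m` of the expansion gives `W_{m,j} u = 0` for `m < j`.
In the case `j ≤ i` only the term `m = j` then survives, so `W_{i,k} v` is a multiple of
`W_{j,i}ᵀ u`, and `W_{i,k}ᵀ W_{j,i}ᵀ = C(k-j, i-j) W_{j,k}ᵀ` carries it back to a multiple of `v`.
-/

open Finset Matrix

section InclusionMatrix

variable (R α : Type*) [DecidableEq α]

/-- The inclusion matrix `W_{i,k}` of `i`-subsets versus `k`-subsets of a type `α`, with
entries in `R`; it is `inclMatrix n i k` for `R = ℝ` and `α = Fin n`. -/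
def inclusionMatrix [Zero R] [One R] (i k : ℕ) :
    Matrix {S : Finset α // #S = i} {T : Finset α // #T = k} R :=
  fun S T => if S.1 ⊆ T.1 then 1 else 0

variable {R α}

local notation "W" => inclusionMatrix R α

lemma inclusionMatrix_self [Zero R] [One R] (m : ℕ) : W m m = 1 := by
  ext S T
  simp only [inclusionMatrix, one_apply, Subtype.ext_iff,
    subset_iff_eq_of_card_le (T.2.trans S.2.symm).le]

lemma inclusionMatrix_eq_zero_of_lt [Zero R] [One R] {i k : ℕ} (hki : k < i) : W i k = 0 := by
  ext S T
  refine if_neg fun hST => hki.not_ge ?_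
  simpa only [S.2, T.2] using card_le_card hST

section Semiring

variable [Semiring R] [Fintype α]

lemma sum_ite_subset_and_subset (i : ℕ) (M T : Finset α) :
    (∑ S : {S : Finset α // #S = i}, if M ⊆ S.1 ∧ S.1 ⊆ T then (1 : R) else 0) =
      #{S ∈ T.powersetCard i | M ⊆ S} := by
  rw [← sum_subtype (powersetCard i univ) (fun _ => mem_powersetCard_univ)
    (fun S => if M ⊆ S ∧ S ⊆ T then (1 : R) else 0), sum_boole]
  congr 2
  ext S
  simp only [mem_filter, mem_powersetCard, subset_univ, true_and]
  tauto

lemma inclusionMatrix_mul_inclusionMatrix {m i : ℕ} (hmi : m ≤ i) (k : ℕ) :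
    W m i * W i k = (k - m).choose (i - m) • W m k := by
  ext M T
  simp only [mul_apply, inclusionMatrix, ite_zero_mul_ite_zero, mul_one,
    sum_ite_subset_and_subset, Matrix.smul_apply]
  by_cases hMT : M.1 ⊆ T.1
  · rw [card_filter_powersetCard_subset _ _ _ hMT (M.2.trans_le hmi), M.2, T.2, if_pos hMT,
      nsmul_one]
  · rw [if_neg hMT, smul_zero, filter_false_of_mem, card_empty, Nat.cast_zero]
    exact fun S hS hMS => hMT (hMS.trans (mem_powersetCard.mp hS).1)

lemma transpose_inclusionMatrix_mul_apply {m i j : ℕ} (S : {S : Finset α // #S = i})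
    (J : {J : Finset α // #J = j}) :
    ((W m i)ᵀ * W m j) S J = (#(S.1 ∩ J.1)).choose m := by
  have count := sum_ite_subset_and_subset (R := R) m ∅ (S.1 ∩ J.1)
  simpa only [mul_apply, transpose_apply, inclusionMatrix, ite_zero_mul_ite_zero, mul_one,
    empty_subset, true_and, subset_inter_iff, filter_true, card_powersetCard] using count

lemma inclusionMatrix_mul_transpose_apply {i j k : ℕ} (hk : k ≤ Fintype.card α)
    (S : {S : Finset α // #S = i}) (J : {J : Finset α // #J = j}) :
    (W i k * (W j k)ᵀ) S J =
      (Fintype.card α - #(S.1 ∪ J.1)).choose (Fintype.card α - k) := by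
  have count : (W i k * (W j k)ᵀ) S J = #{T ∈ powersetCard k univ | S.1 ∪ J.1 ⊆ T} := by
    rw [← sum_ite_subset_and_subset]
    simp only [mul_apply, transpose_apply, inclusionMatrix, ite_zero_mul_ite_zero, mul_one,
      union_subset_iff, subset_univ, and_true]
  have hcard := card_le_univ (S.1 ∪ J.1)
  rw [count]
  congr 1
  by_cases hle : #(S.1 ∪ J.1) ≤ k
  · rw [card_filter_powersetCard_subset _ _ _ (subset_univ _) hle, card_univ]
    exact Nat.choose_symm_of_eq_add (by omega)
  · rw [Nat.choose_eq_zero_of_lt (by omega), card_eq_zero, filter_eq_empty_iff]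
    exact fun T hT hsub => hle (mem_powersetCard_univ.mp hT ▸ card_le_card hsub)

lemma inclusionMatrix_mul_transpose_eq_sum {i j k : ℕ} (hij : i + j ≤ Fintype.card α)
    (hk : k ≤ Fintype.card α) :
    W i k * (W j k)ᵀ = ∑ m ∈ range (Fintype.card α - k + 1),
      (Fintype.card α - i - j).choose (Fintype.card α - k - m) • ((W m i)ᵀ * W m j) := by
  ext S J
  have hsplit :
      Fintype.card α - #(S.1 ∪ J.1) = #(S.1 ∩ J.1) + (Fintype.card α - i - j) := by
    have hadd := card_union_add_card_inter S.1 J.1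
    have hcard := card_le_univ (S.1 ∪ J.1)
    rw [S.2, J.2] at hadd
    omega
  simp only [inclusionMatrix_mul_transpose_apply hk, Matrix.sum_apply, Matrix.smul_apply,
    transpose_inclusionMatrix_mul_apply, nsmul_eq_mul, hsplit, Nat.add_choose_eq,
    Nat.sum_antidiagonal_eq_sum_range_succ_mk, Nat.cast_sum, Nat.cast_mul]
  exact sum_congr rfl fun m _ => Nat.cast_commute _ _

lemma inclusionMatrix_mulVec_transpose_mulVec {i j k l : ℕ} (hij : i + j ≤ Fintype.card α)
    (hlk : l + k ≤ Fintype.card α) (hl : min i j ≤ l) (u : {S : Finset α // #S = j} → R)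
    (hu : ∀ m < l, W m j *ᵥ u = 0) :
    W i k *ᵥ (W j k)ᵀ *ᵥ u =
      (Fintype.card α - i - j).choose (Fintype.card α - k - l) •
        (W l i)ᵀ *ᵥ W l j *ᵥ u := by
  simp only [mulVec_mulVec u, inclusionMatrix_mul_transpose_eq_sum hij (show k ≤ _ by omega),
    sum_mulVec, smul_mulVec]
  refine sum_eq_single_of_mem l (mem_range.mpr (by omega)) fun m _ hm => ?_
  rw [← mulVec_mulVec]
  rcases lt_or_gt_of_ne hm with hml | hlm
  · rw [hu m hml, mulVec_zero, smul_zero]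
  rcases min_lt_iff.mp (hl.trans_lt hlm) with him | hjm
  · rw [inclusionMatrix_eq_zero_of_lt him, transpose_zero, zero_mulVec, smul_zero]
  · rw [inclusionMatrix_eq_zero_of_lt hjm, zero_mulVec, mulVec_zero, smul_zero]

lemma inclusionMatrix_mulVec_eq_zero_of_transpose_mulVec [IsAddTorsionFree R] {j k : ℕ}
    (hjk : j ≤ k) (hcard : j + k ≤ Fintype.card α) (u : {S : Finset α // #S = j} → R)
    (hu : ∀ m < j, W m k *ᵥ (W j k)ᵀ *ᵥ u = 0) (m : ℕ) (hm : m < j) :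
    W m j *ᵥ u = 0 := by
  induction m using Nat.strong_induction_on with
  | _ m ih =>
    have hsmul : (Fintype.card α - m - j).choose (Fintype.card α - k - m) • W m j *ᵥ u = 0 := by
      have hexpand := inclusionMatrix_mulVec_transpose_mulVec (i := m) (k := k) (by omega)
        (by omega) (min_le_left m j) u fun l hl => ih l hl (hl.trans hm)
      rwa [hu m hm, inclusionMatrix_self, transpose_one, one_mulVec, eq_comm] at hexpand
    exact (smul_eq_zero.mp hsmul).resolve_left (Nat.choose_pos (by omega)).ne'

end Semiring

variable [CommSemiring R] [Fintype α]

lemma transpose_inclusionMatrix_mulVec_mulVec_transpose {i j k : ℕ} (hji : j ≤ i) (hik : i ≤ k)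
    (hcard : j + k ≤ Fintype.card α) (u : {S : Finset α // #S = j} → R)
    (hu : ∀ m < j, W m j *ᵥ u = 0) :
    (W i k)ᵀ *ᵥ W i k *ᵥ (W j k)ᵀ *ᵥ u =
      ((k - j).choose (k - i) * (Fintype.card α - i - j).choose (k - i)) • (W j k)ᵀ *ᵥ u := by
  have hback : (W i k)ᵀ *ᵥ (W j i)ᵀ *ᵥ u = (k - j).choose (k - i) • (W j k)ᵀ *ᵥ u := by
    rw [mulVec_mulVec, ← transpose_mul, inclusionMatrix_mul_inclusionMatrix hji, transpose_smul,
      smul_mulVec, Nat.choose_symm_of_eq_add (show k - j = (i - j) + (k - i) by omega)]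
  rw [inclusionMatrix_mulVec_transpose_mulVec (by omega) hcard (min_le_right i j) u hu,
    inclusionMatrix_self, one_mulVec, mulVec_smul, hback, smul_smul, mul_comm,
    Nat.choose_symm_of_eq_add (n := Fintype.card α - i - j) (b := k - i) (by omega)]

theorem stmt_17_general [IsAddTorsionFree R] {i j k : ℕ} (hik : i ≤ k)
    (hcard : j + k ≤ Fintype.card α) (v : {T : Finset α // #T = k} → R)
    (hvF : ∃ u : {S : Finset α // #S = j} → R, v = (W j k)ᵀ *ᵥ u)
    (hvE : ∀ m < j, W m k *ᵥ v = 0) :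
    (j ≤ i → ((W i k)ᵀ * W i k) *ᵥ v =
      (((k - j).choose (k - i) : R) * ((Fintype.card α - i - j).choose (k - i) : R)) • v) ∧
    (i < j → ((W i k)ᵀ * W i k) *ᵥ v = 0) := by
  rw [← mulVec_mulVec]
  refine ⟨fun hji => ?_, fun hij => by rw [hvE i hij, mulVec_zero]⟩
  obtain ⟨u, rfl⟩ := hvF
  have hu : ∀ m < j, W m j *ᵥ u = 0 :=
    inclusionMatrix_mulVec_eq_zero_of_transpose_mulVec (hji.trans hik) hcard u hvE
  rw [← Nat.cast_mul, Nat.cast_smul_eq_nsmul]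
  exact transpose_inclusionMatrix_mulVec_mulVec_transpose hji hik hcard u hu

end InclusionMatrix

theorem stmt_17 (n k d i j : ℕ) (hid : i ≤ d) (hdk : d < k) (hkn : 2 * k ≤ n) (hjk : j ≤ k)
    (v : {T : Finset (Fin n) // T.card = k} → ℝ)
    -- `v` lies in the span of indicators of `j`-stars:
    (hvF : ∃ u : {S : Finset (Fin n) // S.card = j} → ℝ,
      v = (inclMatrix n j k).transpose.mulVec u)
    -- `v` is orthogonal to the span of indicators of `m`-stars for all `m < j`:
    (hvE : ∀ m : ℕ, m < j → (inclMatrix n m k).mulVec v = 0) :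
    (j ≤ i →
      ((inclMatrix n i k).transpose * inclMatrix n i k).mulVec v =
        ((Nat.choose (k - j) (k - i) : ℝ) * (Nat.choose (n - i - j) (k - i) : ℝ)) • v) ∧
    (i < j → ((inclMatrix n i k).transpose * inclMatrix n i k).mulVec v = 0) := by
  have hcard : j + k ≤ Fintype.card (Fin n) := by rw [Fintype.card_fin]; omega
  have hgeneral := stmt_17_general (hid.trans hdk.le) hcard v hvF hvE
  rwa [Fintype.card_fin] at hgeneral
end
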